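/- Let t ≥ 2 be an integer and let t₀ be the largest integer with 2^{t₀} < t. Then for all sufficiently large n, ex({M(K_t)}, n) = 2ⁿ(1 − 2^{−t₀}) + 2^{t − 2^{t₀} − 1} − 1, where K_t is the complete graph on t vertices. -/

import Mathlib

/-!
Write `k = t - 2 ^ t₀ - 1`. A copy of `M(K_t)` in `M` amounts to `t` linearly independent vectors
`u i` whose pairwise sums lie in `M`.

For the lower bound take subspaces `D ≤ G` with `G` of codimension `t₀` and `dim D = k`, and let `M`
consist of the complement of `G` and the nonzero vectors of `D`. Two of the `u i` in the same coset
of `G` would differ by an element of `D`, so all of them would lie in the span of `D` and one vector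
from each of the `2 ^ t₀` cosets, which has dimension less than `t`.

For the upper bound let `M` be larger than that, with complement `C`. If `M` contains a Bose–Burton
geometry `(X ⊕ F) \ F` with `|X| ≥ t` and `dim F ≥ t`, then the vectors `x i + f i`, with distinct
`x i ∈ X` and independent `f i ∈ F`, give a copy of `M(K_t)`. Otherwise `C` is close to a subspace
of codimension `t₀`. Indeed, a dense set contains a coset of a large subspace, so a Bose–Burton
geometry can be extended by one dimension as long as the set of `y` with `y + X ⊆ M` is dense.
Starting from `X = 0` this forces `|C| ≈ 2 ^ (n - t₀)`; starting from `X = {0, w}` it forces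
`C ∩ (w + C)` to be small for almost all `w ∈ M`. Hence `C` is almost closed under addition, which
puts it near a subspace `G`.

Finally `M ∩ G` has at least `2 ^ k` elements, hence contains independent vectors `b 0, …, b k`.
Since `M` contains almost everything outside `G`, there are representatives `v q` of the cosets of
`G`, independent modulo the span `D` of the `b i`, with `v q + v q' + D ⊆ M` for `q ≠ q'`. The `v q`
together with the vectors `v (e i) + b i`, for any injection `e` into the cosets, form a copy of
`M(K_t)`.
-/

open scoped Classical

/-- `M` has an `N`-restriction: some injective linear image of `N` lies inside `M`. -/
def HasRestriction {α β : Type*} [AddCommMonoid α] [AddCommMonoid β]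
    [Module (ZMod 2) α] [Module (ZMod 2) β] (N : Set α) (M : Set β) : Prop :=
  ∃ ψ : α →ₗ[ZMod 2] β, Function.Injective ψ ∧ ψ '' N ⊆ M

/-- The set of distinct `N`-restrictions of `M` (as subsets of `M`). -/
def restrictionSet {α β : Type*} [AddCommMonoid α] [AddCommMonoid β]
    [Module (ZMod 2) α] [Module (ZMod 2) β] (N : Set α) (M : Set β) : Set (Set β) :=
  {S | S ⊆ M ∧ ∃ ψ : α →ₗ[ZMod 2] β, Function.Injective ψ ∧ S = ψ '' N}

/-- The Turán number for a single excluded matroid `N`. -/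
noncomputable def exNum {α : Type*} [AddCommMonoid α] [Module (ZMod 2) α] (N : Set α) (n : ℕ) : ℕ :=
  sSup {m | ∃ M : Set (Fin n → ZMod 2), 0 ∉ M ∧ ¬ HasRestriction N M ∧ M.ncard = m}

/-- The Turán number for a family of excluded matroids. -/
noncomputable def exNumFam (𝒩 : Set (Σ k : ℕ, Set (Fin k → ZMod 2))) (n : ℕ) : ℕ :=
  sSup {m | ∃ M : Set (Fin n → ZMod 2), 0 ∉ M ∧
    (∀ N ∈ 𝒩, ¬ HasRestriction N.2 M) ∧ M.ncard = m}

/-- The critical number of `M ⊆ 𝔽₂ⁿ`. -/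
noncomputable def critNum {n : ℕ} (M : Set (Fin n → ZMod 2)) : ℕ :=
  sInf {c | ∃ φ : (Fin n → ZMod 2) →ₗ[ZMod 2] (Fin c → ZMod 2), ∀ x ∈ M, φ x ≠ 0}

/-- The rank of `M`: dimension of its span. -/
noncomputable def rankM {n : ℕ} (M : Set (Fin n → ZMod 2)) : ℕ :=
  Module.finrank (ZMod 2) (Submodule.span (ZMod 2) M)

/-- `M` is a copy of `N^{n,t}`. -/
def IsCopyNnt {d : ℕ} (N : Set (Fin d → ZMod 2)) (n t : ℕ)
    (M : Set (Fin n → ZMod 2)) : Prop :=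
  ∃ F : Submodule (ZMod 2) (Fin n → ZMod 2), Module.finrank (ZMod 2) F = n - t ∧
    ∃ θ : (Fin d → ZMod 2) →ₗ[ZMod 2] (Fin n → ZMod 2),
      Function.Injective θ ∧ (∀ x, θ x ∈ F) ∧ M = θ '' N ∪ {x | x ∉ F}

/-- The decomposition family `𝒟(𝒩)`. -/
def decompFam (𝒩 : Set (Σ k : ℕ, Set (Fin k → ZMod 2))) (k : ℕ) :
    Set (Σ k : ℕ, Set (Fin k → ZMod 2)) :=
  {D | 0 ∉ D.2 ∧
    (∃ N ∈ 𝒩, ∃ M : Set (Fin N.1 → ZMod 2), IsCopyNnt D.2 N.1 k M ∧ HasRestriction N.2 M) ∧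
    ∀ D' : Σ k : ℕ, Set (Fin k → ZMod 2), 0 ∉ D'.2 →
      (∃ N ∈ 𝒩, ∃ M : Set (Fin N.1 → ZMod 2), IsCopyNnt D'.2 N.1 k M ∧ HasRestriction N.2 M) →
      HasRestriction D'.2 D.2 → HasRestriction D.2 D'.2}

/-- The cycle matroid of a simple graph. -/
def cycleMatroid {V : Type*} [DecidableEq V] (G : SimpleGraph V) : Set (V → ZMod 2) :=
  {x | ∃ u v, G.Adj u v ∧ x = Pi.single u 1 + Pi.single v 1}

open Finset Module

universe u

section Autocorrelation

variable {V : Type*} [AddCommGroup V]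

/-- The autocorrelation of `A` at `w`: the number of `a ∈ A` with `a + w ∈ A`. -/
noncomputable def autocorrelation (A : Finset V) (w : V) : ℕ :=
  #{a ∈ A | a + w ∈ A}

theorem autocorrelation_le_card (A : Finset V) (w : V) : autocorrelation A w ≤ #A :=
  card_filter_le _ _

theorem autocorrelation_zero (A : Finset V) : autocorrelation A 0 = #A := by
  simp [autocorrelation]

theorem autocorrelation_neg (A : Finset V) (w : V) :
    autocorrelation A (-w) = autocorrelation A w := by
  refine card_bij' (fun a _ ↦ a - w) (fun a _ ↦ a + w) ?_ ?_ ?_ ?_ <;>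
    simp +contextual [sub_eq_add_neg]

theorem autocorrelation_add_le (A : Finset V) (w w' : V) :
    autocorrelation A w + autocorrelation A w' ≤ #A + autocorrelation A (w + w') := by
  have h_inter : #({a ∈ A | a + -w ∈ A} ∩ {a ∈ A | a + w' ∈ A}) ≤ autocorrelation A (w + w') :=
    card_le_card_of_injOn (· + -w) (by intro a; simp +contextual) (add_left_injective _).injOn
  rw [← autocorrelation_neg A w, autocorrelation, autocorrelation, ← card_union_add_card_inter]
  gcongr
  exact union_subset (filter_subset _ _) (filter_subset _ _)

theorem sum_autocorrelation [Fintype V] (A : Finset V) :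
    ∑ w, autocorrelation A w = #A ^ 2 := by
  have h_fiber (a : V) : #{w : V | a + w ∈ A} = #A :=
    card_bij' (fun w _ ↦ a + w) (fun b _ ↦ b - a) (by simp) (by simp) (by simp) (by simp)
  simp_rw [autocorrelation, card_filter]
  rw [sum_comm]
  simp_rw [← card_filter, h_fiber, sum_const, smul_eq_mul, sq]

theorem exists_notMem_le_autocorrelation [Fintype V] {A T : Finset V} {δ : ℝ}
    (hT : 2 * #T < δ * Fintype.card V) (hA : δ * Fintype.card V ≤ #A) :
    ∃ f ∉ T, δ ^ 2 / 2 * Fintype.card V ≤ autocorrelation A f := by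
  by_contra! h_small
  have h_in : ∑ f ∈ T, (autocorrelation A f : ℝ) ≤ #T * #A := by
    simpa using sum_le_card_nsmul T _ (#A : ℝ) fun f _ ↦ by
      exact_mod_cast autocorrelation_le_card A f
  have h_out : ∑ f ∈ Tᶜ, (autocorrelation A f : ℝ) ≤
      Fintype.card V * (δ ^ 2 / 2 * Fintype.card V) := by
    calc ∑ f ∈ Tᶜ, (autocorrelation A f : ℝ) ≤ #Tᶜ * (δ ^ 2 / 2 * Fintype.card V) := by
          simpa using sum_le_card_nsmul Tᶜ _ _ fun f hf ↦ (h_small f (mem_compl.1 hf)).le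
      _ ≤ Fintype.card V * (δ ^ 2 / 2 * Fintype.card V) := by
          gcongr; exact card_le_univ _
  have h_total : (∑ f ∈ T, (autocorrelation A f : ℝ)) + ∑ f ∈ Tᶜ, (autocorrelation A f : ℝ) =
      (#A : ℝ) ^ 2 := by
    rw [sum_add_sum_compl]; exact_mod_cast sum_autocorrelation A
  nlinarith

end Autocorrelation

section CosetCore

variable {V : Type*} [AddCommGroup V] [Module (ZMod 2) V]

theorem mem_sup_span_singleton {W : Submodule (ZMod 2) V} {f x : V} :
    x ∈ W ⊔ Submodule.span (ZMod 2) {f} ↔ x ∈ W ∨ x + f ∈ W := by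
  have h_cancel (a : V) : a + f + f = a := by rw [add_assoc, ZModModule.add_self, add_zero]
  constructor
  · intro hx
    obtain ⟨w, hw, y, hy, rfl⟩ := Submodule.mem_sup.1 hx
    obtain ⟨c, rfl⟩ := Submodule.mem_span_singleton.1 hy
    obtain rfl | rfl := (by decide : ∀ c : ZMod 2, c = 0 ∨ c = 1) c
    · exact .inl (by simpa using hw)
    · exact .inr (by simpa [h_cancel] using hw)
  · rintro (hx | hx)
    · exact Submodule.mem_sup_left hx
    · rw [← h_cancel x]
      exact add_mem (Submodule.mem_sup_left hx)
        (Submodule.mem_sup_right (Submodule.mem_span_singleton_self f))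

variable [Fintype V]

/-- The union of the cosets of `W` contained in `A`. -/
noncomputable def cosetCore (A : Finset V) (W : Submodule (ZMod 2) V) : Finset V :=
  {a | ∀ x ∈ W, a + x ∈ A}

@[simp]
theorem mem_cosetCore {A : Finset V} {W : Submodule (ZMod 2) V} {a : V} :
    a ∈ cosetCore A W ↔ ∀ x ∈ W, a + x ∈ A := by
  simp [cosetCore]

theorem cosetCore_bot (A : Finset V) : cosetCore A ⊥ = A := by
  ext; simp

theorem cosetCore_sup_span_singleton (A : Finset V) (W : Submodule (ZMod 2) V) (f : V) :
    cosetCore A (W ⊔ Submodule.span (ZMod 2) {f}) =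
      {a ∈ cosetCore A W | a + f ∈ cosetCore A W} := by
  ext a
  simp only [mem_cosetCore, mem_filter, mem_sup_span_singleton]
  refine ⟨fun h ↦ ⟨fun x hx ↦ h x (.inl hx), fun x hx ↦ ?_⟩, fun ⟨h₀, h₁⟩ x hx ↦ ?_⟩
  · rw [add_assoc]
    exact h _ (.inr (by rwa [add_right_comm, ZModModule.add_self, zero_add]))
  · rcases hx with hx | hx
    · exact h₀ x hx
    · simpa [add_assoc, add_comm x, ← add_assoc f, ZModModule.add_self] using h₁ _ hx

theorem card_eq_two_pow_finrank (V : Type*) [AddCommGroup V] [Module (ZMod 2) V] [Fintype V] :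
    Fintype.card V = 2 ^ finrank (ZMod 2) V := by
  rw [card_eq_pow_finrank (K := ZMod 2), ZMod.card]

theorem sum_card_add_mem (A : Finset V) (F : Submodule (ZMod 2) V) :
    ∑ a, #{f : F | a + (f : V) ∈ A} = Fintype.card F * #A := by
  have h_shift (f : F) : #{a : V | a + (f : V) ∈ A} = #A :=
    card_bij' (fun a _ ↦ a + f) (fun b _ ↦ b - f) (by simp) (by simp) (by simp) (by simp)
  simp_rw [card_filter]
  rw [sum_comm]
  simp_rw [← card_filter, h_shift, sum_const, smul_eq_mul, card_univ]

theorem card_pos_of_notMem_cosetCore {M : Finset V} {X : Submodule (ZMod 2) V} {a : V}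
    (ha : a ∉ cosetCore M X) : 0 < #{x : X | a + (x : V) ∈ Mᶜ} := by
  simp only [mem_cosetCore, not_forall] at ha
  obtain ⟨x, hx, hax⟩ := ha
  exact card_pos.2 ⟨⟨x, hx⟩, by simpa using hax⟩

theorem card_le_card_cosetCore_add (M : Finset V) (X : Submodule (ZMod 2) V) :
    Fintype.card V ≤ #(cosetCore M X) + Fintype.card X * #Mᶜ := by
  have h_pointwise (a : V) :
      1 ≤ (if a ∈ cosetCore M X then 1 else 0) + #{x : X | a + (x : V) ∈ Mᶜ} := by
    split_ifs with ha
    · lia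
    · rw [zero_add]
      exact card_pos_of_notMem_cosetCore ha
  calc Fintype.card V = ∑ _a : V, 1 := by simp
    _ ≤ _ := sum_le_sum fun a _ ↦ h_pointwise a
    _ = _ := by rw [sum_add_distrib, sum_card_add_mem]; simp [-mem_cosetCore]

theorem card_add_autocorrelation_compl_le (M : Finset V) {X : Submodule (ZMod 2) V} {w : V}
    (hwX : w ∈ X) (hw : w ≠ 0) :
    Fintype.card V + autocorrelation Mᶜ w ≤ #(cosetCore M X) + Fintype.card X * #Mᶜ := by
  let S : Finset V := {a ∈ Mᶜ | a + w ∈ Mᶜ}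
  have h_pointwise (a : V) : 1 + (if a ∈ S then 1 else 0) ≤
      (if a ∈ cosetCore M X then 1 else 0) + #{x : X | a + (x : V) ∈ Mᶜ} := by
    by_cases h_pair : a ∈ S
    · have h_two : ({0, ⟨w, hwX⟩} : Finset X) ⊆ ({x : X | a + (x : V) ∈ Mᶜ} : Finset X) := by
        simpa [S, insert_subset_iff] using h_pair
      have h_card := card_le_card h_two
      rw [card_pair fun h ↦ hw (congrArg Subtype.val h).symm] at h_card
      rw [if_pos h_pair]
      lia
    · rw [if_neg h_pair]
      split_ifs with ha
      · lia
      · rw [zero_add, add_zero]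
        exact card_pos_of_notMem_cosetCore ha
  calc Fintype.card V + autocorrelation Mᶜ w = ∑ a, (1 + if a ∈ S then 1 else 0) := by
        rw [sum_add_distrib]; simp [-mem_filter, S, autocorrelation]
    _ ≤ _ := sum_le_sum fun a _ ↦ h_pointwise a
    _ = _ := by rw [sum_add_distrib, sum_card_add_mem]; simp [-mem_cosetCore]

end CosetCore

section AffineHilbert

theorem exists_dense_cosetCore (m : ℕ) {δ : ℝ} (hδ : 0 < δ) :
    ∃ δ' > (0 : ℝ), ∃ n₀ : ℕ, ∀ (V : Type u) [AddCommGroup V] [Module (ZMod 2) V] [Fintype V]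
      (A : Finset V), n₀ ≤ finrank (ZMod 2) V → δ * Fintype.card V ≤ #A →
      ∃ W : Submodule (ZMod 2) V, finrank (ZMod 2) W = m ∧
        δ' * Fintype.card V ≤ #(cosetCore A W) := by
  induction m with
  | zero => exact ⟨δ, hδ, 0, fun V _ _ _ A _ hA ↦ ⟨⊥, by simp, by rwa [cosetCore_bot]⟩⟩
  | succ m ih =>
    obtain ⟨δ', hδ', n₀, hn₀⟩ := ih
    obtain ⟨n₁, hn₁⟩ := exists_nat_gt (2 ^ (m + 1) / δ')
    refine ⟨δ' ^ 2 / 2, by positivity, max n₀ n₁, fun V _ _ _ A hV hA ↦ ?_⟩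
    obtain ⟨W, hW, hcore⟩ := hn₀ V A (le_of_max_le_left hV) hA
    have hW_small : 2 * #{x | x ∈ W} < δ' * Fintype.card V := by
      have hn₁_card : (n₁ : ℝ) ≤ Fintype.card V := by
        rw [card_eq_two_pow_finrank V]
        exact_mod_cast (le_of_max_le_right hV).trans Nat.lt_two_pow_self.le
      have hW_card : #{x | x ∈ W} = 2 ^ m := by
        rw [← Fintype.card_subtype, ← hW]
        exact card_eq_two_pow_finrank W
      rw [div_lt_iff₀ hδ'] at hn₁
      rw [hW_card]
      push_cast
      rw [← pow_succ']
      nlinarith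
    obtain ⟨f, hfW, hf⟩ := exists_notMem_le_autocorrelation hW_small hcore
    refine ⟨W ⊔ Submodule.span (ZMod 2) {f}, ?_, ?_⟩
    · rw [Submodule.finrank_sup_span_singleton (by simpa using hfW), hW]
    · rwa [cosetCore_sup_span_singleton]

theorem exists_translate_dense {V : Type*} [AddCommGroup V] [Module (ZMod 2) V] [Fintype V]
    (F : Submodule (ZMod 2) V) {A : Finset V} {δ : ℝ} (hA : δ * Fintype.card V ≤ #A) :
    ∃ a : V, δ * Fintype.card F ≤ #{f : F | a + (f : V) ∈ A} := by
  by_contra! h_sparse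
  have h_sum : (∑ a : V, #{f : F | a + (f : V) ∈ A} : ℝ) = Fintype.card F * #A :=
    mod_cast sum_card_add_mem A F
  have h_lt : (∑ a : V, #{f : F | a + (f : V) ∈ A} : ℝ) <
      Fintype.card V * (δ * Fintype.card F) := by
    simpa using sum_lt_sum_of_nonempty univ_nonempty fun a _ ↦ h_sparse a
  have h_le := mul_le_mul_of_nonneg_left hA (Nat.cast_nonneg (α := ℝ) (Fintype.card F))
  linarith

theorem exists_coset_subset (m : ℕ) {δ : ℝ} (hδ : 0 < δ) :
    ∃ n₀ : ℕ, ∀ (V : Type u) [AddCommGroup V] [Module (ZMod 2) V] [Fintype V]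
      (A : Finset V) (F : Submodule (ZMod 2) V), n₀ ≤ finrank (ZMod 2) F →
      δ * Fintype.card V ≤ #A →
      ∃ z, ∃ W ≤ F, finrank (ZMod 2) W = m ∧ ∀ w ∈ W, z + w ∈ A := by
  obtain ⟨δ', hδ', n₀, hn₀⟩ := exists_dense_cosetCore.{u} m hδ
  refine ⟨n₀, fun V _ _ _ A F hF hA ↦ ?_⟩
  obtain ⟨a, ha⟩ := exists_translate_dense F hA
  obtain ⟨W, hW, hcore⟩ := hn₀ F _ hF ha
  obtain ⟨y, hy⟩ : (cosetCore ({f : F | a + (f : V) ∈ A} : Finset F) W).Nonempty := by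
    rw [← card_pos, ← Nat.cast_pos (α := ℝ)]
    exact hcore.trans_lt' (by positivity)
  refine ⟨a + y, W.map F.subtype, Submodule.map_subtype_le F W,
    by rw [Submodule.finrank_map_subtype_eq, hW], ?_⟩
  rintro _ ⟨w, hw, rfl⟩
  simpa [add_assoc] using mem_cosetCore.1 hy w hw

end AffineHilbert

section BoseBurton

section Basic

variable {V : Type*} [AddCommGroup V] [Module (ZMod 2) V]

/-- `M` contains the Bose–Burton geometry `(X ⊕ F) \ F`, that is, all cosets `x + F` with
`0 ≠ x ∈ X`. That `X` and `F` are disjoint is not required, but follows when `0 ∉ M`. -/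
def ContainsBoseBurton (M : Finset V) (X F : Submodule (ZMod 2) V) : Prop :=
  ∀ x ∈ X, x ≠ 0 → ∀ f ∈ F, x + f ∈ M

/-- `M` contains no Bose–Burton geometry `(X ⊕ F) \ F` with `dim X = k` and `dim F ≥ m`. -/
def BoseBurtonFree (M : Finset V) (k m : ℕ) : Prop :=
  ∀ X F : Submodule (ZMod 2) V, finrank (ZMod 2) X = k → m ≤ finrank (ZMod 2) F →
    ¬ ContainsBoseBurton M X F

theorem containsBoseBurton_bot (M : Finset V) (F : Submodule (ZMod 2) V) :
    ContainsBoseBurton M ⊥ F :=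
  fun x hx hx₀ ↦ absurd (by simpa using hx) hx₀

theorem ContainsBoseBurton.disjoint {M : Finset V} {X F : Submodule (ZMod 2) V}
    (h : ContainsBoseBurton M X F) (hM : 0 ∉ M) : Disjoint X F := by
  rw [Submodule.disjoint_def]
  intro x hxX hxF
  by_contra hx
  exact hM (by simpa [ZModModule.add_self] using h x hxX hx x hxF)

end Basic

theorem exists_containsBoseBurton_sup_span_singleton (m : ℕ) {δ : ℝ} (hδ : 0 < δ) :
    ∃ n₀ : ℕ, ∀ (V : Type u) [AddCommGroup V] [Module (ZMod 2) V] [Fintype V]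
      (M A : Finset V) (X F : Submodule (ZMod 2) V), 0 ∉ M → ContainsBoseBurton M X F →
      n₀ ≤ finrank (ZMod 2) F → A ⊆ cosetCore M X → δ * Fintype.card V ≤ #A →
      ∃ z ∈ A, z ∉ X ∧ ∃ F' : Submodule (ZMod 2) V, m ≤ finrank (ZMod 2) F' ∧
        ContainsBoseBurton M (X ⊔ Submodule.span (ZMod 2) {z}) F' := by
  obtain ⟨n₀, hn₀⟩ := exists_coset_subset.{u} m hδ
  refine ⟨n₀, fun V _ _ _ M A X F hM hXF hF hA hδA ↦ ?_⟩
  obtain ⟨z, W, hWF, hW, hzW⟩ := hn₀ V A F hF hδA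
  have h_core (w : V) (hw : w ∈ W) (x : V) (hx : x ∈ X) : z + w + x ∈ M :=
    mem_cosetCore.1 (hA (hzW w hw)) x hx
  refine ⟨z, by simpa using hzW 0 W.zero_mem, fun hz ↦ hM ?_, W, hW.ge, fun x hx hx₀ w hw ↦ ?_⟩
  · simpa [ZModModule.add_self] using h_core 0 W.zero_mem z hz
  · obtain hx | hx := mem_sup_span_singleton.1 hx
    · exact hXF x hx hx₀ w (hWF hw)
    · convert h_core w hw _ hx using 1
      rw [show z + w + (x + z) = x + w + (z + z) by abel, ZModModule.add_self, add_zero]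

theorem exists_containsBoseBurton_extension (t j m : ℕ) :
    ∃ n₀ : ℕ, ∀ (V : Type u) [AddCommGroup V] [Module (ZMod 2) V] [Fintype V]
      (M : Finset V) (X F : Submodule (ZMod 2) V), 0 ∉ M → ContainsBoseBurton M X F →
      n₀ ≤ finrank (ZMod 2) F → finrank (ZMod 2) X + j ≤ t → 2 ^ t * #Mᶜ ≤ Fintype.card V →
      ∃ X' ≥ X, ∃ F' : Submodule (ZMod 2) V,
        finrank (ZMod 2) X' = finrank (ZMod 2) X + j ∧ m ≤ finrank (ZMod 2) F' ∧
          ContainsBoseBurton M X' F' := by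
  induction j with
  | zero => exact ⟨m, fun V _ _ _ M X F _ hXF hF _ _ ↦ ⟨X, le_rfl, F, rfl, hF, hXF⟩⟩
  | succ j ih =>
    obtain ⟨n₁, hn₁⟩ := ih
    obtain ⟨n₀, hn₀⟩ := exists_containsBoseBurton_sup_span_singleton.{u} n₁ one_half_pos
    refine ⟨n₀, fun V _ _ _ M X F hM hXF hF hX hMc ↦ ?_⟩
    have h_dense : 1 / 2 * (Fintype.card V : ℝ) ≤ #(cosetCore M X) := by
      have h_half : 2 * (Fintype.card X * #Mᶜ) ≤ Fintype.card V := by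
        rw [card_eq_two_pow_finrank X, ← mul_assoc, ← pow_succ']
        refine le_trans ?_ hMc
        gcongr <;> lia
      have h_core : Fintype.card V ≤ 2 * #(cosetCore M X) := by
        linarith [card_le_card_cosetCore_add M X]
      rify at h_core
      linarith
    obtain ⟨z, -, hzX, F₁, hF₁, hXF₁⟩ := hn₀ V M _ X F hM hXF hF subset_rfl h_dense
    have h_dim := Submodule.finrank_sup_span_singleton hzX
    obtain ⟨X', hX', F', h_dim', hF', hXF'⟩ := hn₁ V M _ F₁ hM hXF₁ hF₁ (by lia) hMc
    exact ⟨X', le_sup_left.trans hX', F', by lia, hF', hXF'⟩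

theorem BoseBurtonFree.card_cosetCore_lt (m : ℕ) {ε : ℝ} (hε : 0 < ε) :
    ∃ n₀ : ℕ, ∀ (V : Type u) [AddCommGroup V] [Module (ZMod 2) V] [Fintype V]
      (M : Finset V) (X F : Submodule (ZMod 2) V), 0 ∉ M →
      BoseBurtonFree M (finrank (ZMod 2) X + 1) m → ContainsBoseBurton M X F →
      n₀ ≤ finrank (ZMod 2) F → #(cosetCore M X) < ε * Fintype.card V := by
  obtain ⟨n₀, hn₀⟩ := exists_containsBoseBurton_sup_span_singleton.{u} m hε
  refine ⟨n₀, fun V _ _ _ M X F hM h_free hXF hF ↦ ?_⟩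
  by_contra! h_dense
  obtain ⟨z, -, hzX, F', hF', hXF'⟩ := hn₀ V M _ X F hM hXF hF subset_rfl h_dense
  exact h_free _ F' (Submodule.finrank_sup_span_singleton hzX) hF' hXF'

theorem BoseBurtonFree.lt_card_compl (t m : ℕ) {ε : ℝ} (hε : 0 < ε) :
    ∃ n₀ : ℕ, ∀ (V : Type u) [AddCommGroup V] [Module (ZMod 2) V] [Fintype V] (M : Finset V),
      0 ∉ M → n₀ ≤ finrank (ZMod 2) V → BoseBurtonFree M (t + 1) m →
      2 ^ t * #Mᶜ ≤ Fintype.card V → (1 - ε) * Fintype.card V < 2 ^ t * #Mᶜ := by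
  obtain ⟨n₁, hn₁⟩ := BoseBurtonFree.card_cosetCore_lt.{u} m hε
  obtain ⟨n₀, hn₀⟩ := exists_containsBoseBurton_extension.{u} t t n₁
  refine ⟨n₀, fun V _ _ _ M hM hV h_free hMc ↦ ?_⟩
  obtain ⟨X, -, F, hX, hF, hXF⟩ := hn₀ V M ⊥ ⊤ hM (containsBoseBurton_bot M ⊤)
    (by rwa [finrank_top]) (by simp) hMc
  rw [finrank_bot, zero_add] at hX
  have h_core := hn₁ V M X F hM (by rwa [hX]) hXF hF
  have h_count := card_le_card_cosetCore_add M X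
  rw [card_eq_two_pow_finrank X, hX] at h_count
  rify at h_count
  linarith

theorem BoseBurtonFree.card_popular_lt {t : ℕ} (ht : t ≠ 0) (m : ℕ) {ε : ℝ} (hε : 0 < ε) :
    ∃ n₀ : ℕ, ∀ (V : Type u) [AddCommGroup V] [Module (ZMod 2) V] [Fintype V] (M : Finset V),
      0 ∉ M → n₀ ≤ finrank (ZMod 2) V → BoseBurtonFree M (t + 1) m →
      2 ^ t * #Mᶜ ≤ Fintype.card V →
      #{w ∈ M | ε * Fintype.card V < autocorrelation Mᶜ w} < ε * Fintype.card V := by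
  obtain ⟨n₂, hn₂⟩ := BoseBurtonFree.card_cosetCore_lt.{u} m hε
  obtain ⟨n₁, hn₁⟩ := exists_containsBoseBurton_extension.{u} t (t - 1) n₂
  obtain ⟨n₀, hn₀⟩ := exists_containsBoseBurton_sup_span_singleton.{u} n₁ hε
  refine ⟨n₀, fun V _ _ _ M hM hV h_free hMc ↦ ?_⟩
  by_contra! h_dense
  obtain ⟨z, hz, hz₀, F₁, hF₁, hXF₁⟩ := hn₀ V M _ ⊥ ⊤ hM (containsBoseBurton_bot M ⊤)
    (by rwa [finrank_top]) (by rw [cosetCore_bot]; exact filter_subset _ _) h_dense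
  have h_dim := Submodule.finrank_sup_span_singleton hz₀
  rw [finrank_bot] at h_dim
  obtain ⟨X, hX, F, hX_dim, hF, hXF⟩ := hn₁ V M _ F₁ hM hXF₁ hF₁ (by lia) hMc
  replace hX_dim : finrank (ZMod 2) X = t := by lia
  have hzX : z ∈ X := hX (Submodule.mem_sup_right (Submodule.mem_span_singleton_self z))
  have h_core := hn₂ V M X F hM (by rwa [hX_dim]) hXF hF
  have h_count := card_add_autocorrelation_compl_le M hzX (by simpa using hz₀)
  rw [card_eq_two_pow_finrank X, hX_dim] at h_count
  have h_popular := (mem_filter.1 hz).2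
  rify at h_count hMc
  linarith

end BoseBurton

section NearSubgroup

variable {V : Type*} [AddCommGroup V] [Fintype V]

theorem sum_card_sub_autocorrelation (C : Finset V) :
    ∑ w ∈ C, (#C - autocorrelation C w : ℝ) = ∑ w ∈ Cᶜ, (autocorrelation C w : ℝ) := by
  have h_total : (∑ w ∈ C, (autocorrelation C w : ℝ)) + ∑ w ∈ Cᶜ, (autocorrelation C w : ℝ) =
      (#C : ℝ) ^ 2 := by
    rw [sum_add_sum_compl]; exact_mod_cast sum_autocorrelation C
  rw [sum_sub_distrib, sum_const, nsmul_eq_mul]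
  linarith

variable {C : Finset V} {η : ℝ}

theorem card_autocorrelation_lt_le (hC : C.Nonempty)
    (h_sum : ∑ w ∈ Cᶜ, (autocorrelation C w : ℝ) ≤ η * #C ^ 2) (θ : ℝ) :
    θ * #{w ∈ C | autocorrelation C w < (1 - θ) * #C} ≤ η * #C := by
  have hC₀ : (0 : ℝ) < #C := mod_cast hC.card_pos
  refine le_of_mul_le_mul_right ?_ hC₀
  calc θ * #{w ∈ C | autocorrelation C w < (1 - θ) * #C} * #C
      = ∑ w ∈ C with autocorrelation C w < (1 - θ) * #C, θ * #C := by
        rw [sum_const, nsmul_eq_mul]; ring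
    _ ≤ ∑ w ∈ C with autocorrelation C w < (1 - θ) * #C, (#C - autocorrelation C w : ℝ) := by
        refine sum_le_sum fun w hw ↦ ?_
        linarith [(mem_filter.1 hw).2]
    _ ≤ ∑ w ∈ C, (#C - autocorrelation C w : ℝ) :=
        sum_le_sum_of_subset_of_nonneg (filter_subset _ _) fun w _ _ ↦
          sub_nonneg.2 (mod_cast autocorrelation_le_card C w)
    _ ≤ η * #C * #C := by rw [sum_card_sub_autocorrelation]; linarith

/- Each such `w` is a difference of two elements of `C` with almost maximal autocorrelation. The gap
between `1 / 2` and `3 / 4` makes `{w | 1 / 2 * #C ≤ autocorrelation C w}` a subgroup. -/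
theorem three_quarters_le_autocorrelation (hη : η < 1 / 32) (hC : C.Nonempty)
    (h_sum : ∑ w ∈ Cᶜ, (autocorrelation C w : ℝ) ≤ η * #C ^ 2) {w : V}
    (hw : 1 / 2 * #C ≤ (autocorrelation C w : ℝ)) :
    3 / 4 * #C ≤ (autocorrelation C w : ℝ) := by
  have hC₀ : (0 : ℝ) < #C := mod_cast hC.card_pos
  set B : Finset V := {w ∈ C | autocorrelation C w < (1 - 1 / 8 : ℝ) * #C} with hB
  have hB_card : 1 / 8 * (#B : ℝ) ≤ η * #C := card_autocorrelation_lt_le hC h_sum _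
  obtain ⟨a, ha, haw, haB, hawB⟩ : ∃ a ∈ C, a + w ∈ C ∧ a ∉ B ∧ a + w ∉ B := by
    by_contra! h_bad
    have h_sub : {a ∈ C | a + w ∈ C} ⊆ B ∪ B.image (· - w) := by
      intro a ha
      obtain ⟨ha, haw⟩ := mem_filter.1 ha
      by_cases haB : a ∈ B
      · exact mem_union_left _ haB
      · exact mem_union_right _ (mem_image.2 ⟨a + w, h_bad a ha haw haB, add_sub_cancel_right a w⟩)
    have h_le : autocorrelation C w ≤ #B + #B :=
      (card_le_card h_sub).trans <| (card_union_le _ _).trans <|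
        Nat.add_le_add_left card_image_le _
    rify at h_le
    nlinarith
  have h_add := autocorrelation_add_le C (a + w) (-a)
  rw [autocorrelation_neg, add_neg_cancel_comm] at h_add
  simp only [hB, mem_filter, ha, haw, true_and, not_lt] at haB hawB
  rify at h_add
  linarith

theorem exists_addSubgroup_near (hη : η < 1 / 32) (hC : C.Nonempty)
    (h_sum : ∑ w ∈ Cᶜ, (autocorrelation C w : ℝ) ≤ η * #C ^ 2) :
    ∃ G : AddSubgroup V, #{x ∈ C | x ∉ G} ≤ 2 * η * #C ∧ #{x ∈ Cᶜ | x ∈ G} ≤ 2 * η * #C := by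
  have hC₀ : (0 : ℝ) < #C := mod_cast hC.card_pos
  let G : AddSubgroup V :=
    { carrier := {w | 1 / 2 * #C ≤ (autocorrelation C w : ℝ)}
      add_mem' := fun {x y} hx hy ↦ by
        have hx' := three_quarters_le_autocorrelation hη hC h_sum hx
        have hy' := three_quarters_le_autocorrelation hη hC h_sum hy
        have h_add := autocorrelation_add_le C x y
        rify at h_add
        simp only [Set.mem_ofPred_eq]
        linarith
      zero_mem' := by
        simp only [Set.mem_ofPred_eq, autocorrelation_zero]
        linarith
      neg_mem' := by simp [autocorrelation_neg] }
  have hG {x : V} : x ∈ G ↔ 1 / 2 * #C ≤ (autocorrelation C x : ℝ) := Iff.rfl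
  refine ⟨G, ?_, ?_⟩
  · have h_markov := card_autocorrelation_lt_le hC h_sum (1 / 2)
    simp_rw [hG, not_le]
    norm_num at h_markov ⊢
    linarith
  · refine le_of_mul_le_mul_right ?_ hC₀
    have h_le : #{x ∈ Cᶜ | x ∈ G} • (1 / 2 * #C : ℝ) ≤
        ∑ x ∈ Cᶜ with x ∈ G, (autocorrelation C x : ℝ) :=
      card_nsmul_le_sum _ _ _ fun x hx ↦ hG.1 (mem_filter.1 hx).2
    have h_sub : ∑ x ∈ Cᶜ with x ∈ G, (autocorrelation C x : ℝ) ≤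
        ∑ x ∈ Cᶜ, (autocorrelation C x : ℝ) :=
      sum_le_sum_of_subset_of_nonneg (filter_subset _ _) fun _ _ _ ↦ by positivity
    rw [nsmul_eq_mul] at h_le
    nlinarith

end NearSubgroup

section Stability

theorem sum_autocorrelation_le {V : Type*} [AddCommGroup V] (C T : Finset V) {β : ℝ} (hβ : 0 ≤ β) :
    ∑ w ∈ T, (autocorrelation C w : ℝ) ≤
      #{w ∈ T | β < autocorrelation C w} * #C + #T * β := by
  rw [← sum_filter_add_sum_filter_not T (fun w ↦ β < autocorrelation C w)]
  gcongr
  · simpa using sum_le_card_nsmul _ _ (#C : ℝ) fun w _ ↦ mod_cast autocorrelation_le_card C w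
  · calc ∑ w ∈ T with ¬ β < autocorrelation C w, (autocorrelation C w : ℝ)
        ≤ #{w ∈ T | ¬ β < autocorrelation C w} * β := by
          simpa using sum_le_card_nsmul _ _ β fun w hw ↦ not_lt.1 (mem_filter.1 hw).2
      _ ≤ #T * β := by gcongr; exact filter_subset _ _

theorem finrank_add_eq_of_card_lt {V : Type*} [AddCommGroup V] [Module (ZMod 2) V] [Fintype V]
    {G : Submodule (ZMod 2) V} {t : ℕ} (h_upper : 2 ^ t * Fintype.card G < 2 * Fintype.card V)
    (h_lower : Fintype.card V < 2 * (2 ^ t * Fintype.card G)) :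
    finrank (ZMod 2) G + t = finrank (ZMod 2) V := by
  rw [card_eq_two_pow_finrank V, card_eq_two_pow_finrank G, ← pow_add, ← pow_succ'] at *
  rw [Nat.pow_lt_pow_iff_right one_lt_two] at *
  lia

theorem sum_autocorrelation_compl_le {V : Type*} [AddCommGroup V] [Fintype V] {C : Finset V}
    {ε K : ℝ} (hε : 0 ≤ ε) (hC : Fintype.card V ≤ K * #C)
    (h_popular : #{w ∈ Cᶜ | ε * Fintype.card V < autocorrelation C w} ≤ ε * Fintype.card V) :
    ∑ w ∈ Cᶜ, (autocorrelation C w : ℝ) ≤ (K + K ^ 2) * ε * #C ^ 2 := by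
  have hC₀ : 0 ≤ K * #C := hC.trans' (by positivity)
  calc ∑ w ∈ Cᶜ, (autocorrelation C w : ℝ)
      ≤ #{w ∈ Cᶜ | ε * Fintype.card V < autocorrelation C w} * #C +
          #Cᶜ * (ε * Fintype.card V) :=
        sum_autocorrelation_le C Cᶜ (by positivity)
    _ ≤ ε * Fintype.card V * #C + Fintype.card V * (ε * Fintype.card V) := by
        gcongr
        exact card_le_univ Cᶜ
    _ ≤ ε * (K * #C) * #C + K * #C * (ε * (K * #C)) := by gcongr
    _ = (K + K ^ 2) * ε * #C ^ 2 := by ring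

theorem exists_submodule_near {V : Type*} [AddCommGroup V] [Module (ZMod 2) V] [Fintype V]
    {C : Finset V} {t : ℕ} {ε : ℝ} (hε : 0 ≤ ε) (hε_small : 12 * (2 ^ t) ^ 2 * ε < 1 / 16)
    (h_upper : 2 ^ t * #C ≤ Fintype.card V) (h_lower : (1 - ε) * Fintype.card V < 2 ^ t * #C)
    (h_popular : #{w ∈ Cᶜ | ε * Fintype.card V < autocorrelation C w} ≤ ε * Fintype.card V) :
    ∃ G : Submodule (ZMod 2) V, finrank (ZMod 2) G + t = finrank (ZMod 2) V ∧
      #{x ∈ C | x ∉ G} ≤ 12 * (2 ^ t) ^ 2 * ε * Fintype.card V := by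
  have h_pow : (1 : ℝ) ≤ 2 ^ t := one_le_pow₀ one_le_two
  have hε_lt : ε < 1 / 16 := by nlinarith [one_le_pow₀ (n := 2) h_pow]
  have hV : (0 : ℝ) < Fintype.card V := mod_cast Fintype.card_pos
  have hC : (0 : ℝ) < #C :=
    pos_of_mul_pos_right (h_lower.trans' (mul_pos (by linarith) hV)) (by positivity)
  have h_sum := sum_autocorrelation_compl_le (K := 2 * 2 ^ t) hε (by nlinarith) h_popular
  obtain ⟨G, h_out, h_in⟩ := exists_addSubgroup_near (η := 6 * (2 ^ t) ^ 2 * ε) (by linarith)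
    (card_pos.1 (mod_cast hC)) (h_sum.trans (by gcongr; nlinarith))
  have h_symmDiff : Fintype.card (AddSubgroup.toZModSubmodule 2 G) + #{x ∈ C | x ∉ G} =
      #C + #{x ∈ Cᶜ | x ∈ G} := by
    have h_union := card_sdiff_add_card C {x | x ∈ G}
    rw [union_comm, ← card_sdiff_add_card] at h_union
    rw [Fintype.card_subtype]
    convert h_union using 1 <;> rw [add_comm] <;> congr 2 <;> ext <;> simp [and_comm]
  have h_error : 2 * (6 * (2 ^ t) ^ 2 * ε) * #C ≤ 1 / 16 * #C := by gcongr; linarith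
  rify at h_symmDiff
  refine ⟨AddSubgroup.toZModSubmodule 2 G, finrank_add_eq_of_card_lt ?_ ?_, ?_⟩
  · have hG_upper : (Fintype.card (AddSubgroup.toZModSubmodule 2 G) : ℝ) ≤ 17 / 16 * #C := by
      linarith
    rify at h_upper ⊢
    linarith [mul_le_mul_of_nonneg_left hG_upper (zero_le_one.trans h_pow)]
  · have hG_lower : 15 / 16 * #C ≤ (Fintype.card (AddSubgroup.toZModSubmodule 2 G) : ℝ) := by
      linarith
    rify
    nlinarith [mul_le_mul_of_nonneg_left hG_lower (zero_le_one.trans h_pow)]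
  · simp only [AddSubgroup.mem_toZModSubmodule]
    have hCV : (#C : ℝ) ≤ Fintype.card V := mod_cast card_le_univ C
    linarith [mul_le_mul_of_nonneg_left hCV (by positivity : 0 ≤ 12 * (2 ^ t) ^ 2 * ε)]

theorem BoseBurtonFree.exists_near_submodule (t m : ℕ) {κ : ℝ} (hκ : 0 < κ) :
    ∃ n₀ : ℕ, ∀ (V : Type u) [AddCommGroup V] [Module (ZMod 2) V] [Fintype V] (M : Finset V),
      0 ∉ M → n₀ ≤ finrank (ZMod 2) V → BoseBurtonFree M (t + 1) m →
      2 ^ t * #Mᶜ ≤ Fintype.card V →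
      ∃ G : Submodule (ZMod 2) V, finrank (ZMod 2) G + t = finrank (ZMod 2) V ∧
        #{x ∈ Mᶜ | x ∉ G} ≤ κ * Fintype.card V := by
  rcases eq_or_ne t 0 with rfl | ht
  · exact ⟨0, fun V _ _ _ M _ _ _ _ ↦ ⟨⊤, by simp, by simpa using by positivity⟩⟩
  obtain ⟨ε, hε, hε_small, hεκ⟩ : ∃ ε > (0 : ℝ), 12 * (2 ^ t) ^ 2 * ε < 1 / 16 ∧
      12 * (2 ^ t) ^ 2 * ε ≤ κ := by
    refine ⟨min (1 / 17) κ / (12 * (2 ^ t) ^ 2), by positivity, ?_, ?_⟩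
    · rw [mul_div_cancel₀ _ (by positivity)]
      exact (min_le_left _ _).trans_lt (by norm_num)
    · rw [mul_div_cancel₀ _ (by positivity)]
      exact min_le_right _ _
  obtain ⟨n₁, hn₁⟩ := BoseBurtonFree.lt_card_compl.{u} t m hε
  obtain ⟨n₂, hn₂⟩ := BoseBurtonFree.card_popular_lt.{u} ht m hε
  refine ⟨max n₁ n₂, fun V _ _ _ M hM hV h_free hMc ↦ ?_⟩
  obtain ⟨G, hG, h_near⟩ := exists_submodule_near hε.le hε_small hMc
    (hn₁ V M hM (le_of_max_le_left hV) h_free hMc)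
    (by simpa using (hn₂ V M hM (le_of_max_le_right hV) h_free hMc).le)
  exact ⟨G, hG, h_near.trans (by gcongr)⟩

end Stability

section CycleMatroid

theorem hasRestriction_cycleMatroid_top_iff {ι V : Type*} [Finite ι] [DecidableEq ι]
    [AddCommGroup V] [Module (ZMod 2) V] {M : Set V} :
    HasRestriction (cycleMatroid (⊤ : SimpleGraph ι)) M ↔
      ∃ u : ι → V, LinearIndependent (ZMod 2) u ∧ Pairwise fun i j ↦ u i + u j ∈ M := by
  have := Fintype.ofFinite ι
  constructor
  · rintro ⟨ψ, hψ, hψM⟩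
    refine ⟨fun i ↦ ψ (Pi.single i 1), ?_, fun i j hij ↦ ?_⟩
    · simpa [Function.comp_def] using
        (Pi.basisFun (ZMod 2) ι).linearIndependent.map' ψ (LinearMap.ker_eq_bot.2 hψ)
    · simp only [← map_add]
      exact hψM ⟨_, ⟨i, j, hij, rfl⟩, rfl⟩
  · rintro ⟨u, hu, huM⟩
    refine ⟨Fintype.linearCombination (ZMod 2) u, hu.fintypeLinearCombination_injective, ?_⟩
    rintro _ ⟨_, ⟨i, j, hij, rfl⟩, rfl⟩
    simpa [Fintype.linearCombination_apply_single] using huM hij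

variable {V : Type*} [AddCommGroup V] [Module (ZMod 2) V]

theorem ContainsBoseBurton.hasRestriction_cycleMatroid [Fintype V] {ι : Type*} [Fintype ι]
    [DecidableEq ι] {M : Finset V} {X F : Submodule (ZMod 2) V}
    (h : ContainsBoseBurton M X F) (hM : 0 ∉ M) (hX : Fintype.card ι ≤ Fintype.card X)
    (hF : Fintype.card ι ≤ finrank (ZMod 2) F) :
    HasRestriction (cycleMatroid (⊤ : SimpleGraph ι)) (M : Set V) := by
  obtain ⟨x⟩ := Function.Embedding.nonempty_of_card_le hX
  obtain ⟨b', hb'⟩ := exists_linearIndependent_of_le_finrank hF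
  obtain ⟨b, hb⟩ : ∃ b : ι → F, LinearIndependent (ZMod 2) b :=
    ⟨_, hb'.comp _ (Fintype.equivFin ι).injective⟩
  refine hasRestriction_cycleMatroid_top_iff.2 ⟨fun i ↦ x i + b i, ?_, fun i j hij ↦ ?_⟩
  · have h_ker : LinearMap.ker (X.mkQ ∘ₗ F.subtype) = ⊥ := by
      rw [LinearMap.ker_comp, Submodule.ker_mkQ, ← Submodule.disjoint_iff_comap_eq_bot]
      exact (h.disjoint hM).symm
    have h_comp : X.mkQ ∘ (fun i ↦ (x i + b i : V)) = (X.mkQ ∘ₗ F.subtype) ∘ b := by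
      ext i
      simp
    refine LinearIndependent.of_comp X.mkQ ?_
    rw [h_comp]
    exact hb.map' _ h_ker
  · have hx : (x i + x j : V) ≠ 0 := by
      rw [← ZModModule.sub_eq_add, sub_ne_zero]
      exact fun h_eq ↦ hij (x.injective (Subtype.ext h_eq))
    have h_mem := h _ (add_mem (x i).2 (x j).2) hx _ (add_mem (b i).2 (b j).2)
    rwa [add_add_add_comm] at h_mem

theorem exists_linearIndependent_of_two_pow_le_card [Finite V] {S : Finset V} (hS : 0 ∉ S) {k : ℕ}
    (hk : 2 ^ k ≤ #S) :
    ∃ b : Fin (k + 1) → V, LinearIndependent (ZMod 2) b ∧ ∀ i, b i ∈ S := by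
  have h_dim : k < finrank (ZMod 2) (Submodule.span (ZMod 2) (S : Set V)) := by
    have := Fintype.ofFinite V
    rw [← Nat.pow_lt_pow_iff_right one_lt_two, ← card_eq_two_pow_finrank, Fintype.card_subtype]
    refine hk.trans_lt (card_lt_card ⟨fun x hx ↦ ?_, fun h ↦ hS (h ?_)⟩)
    · simpa using Submodule.subset_span hx
    · simp
  obtain ⟨b, hbS, -, hb⟩ := Submodule.exists_fun_fin_finrank_span_eq (ZMod 2) (S : Set V)
  exact ⟨b ∘ Fin.castLE h_dim, hb.comp _ (Fin.castLE_injective h_dim), fun i ↦ hbS _⟩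

end CycleMatroid

section Transversal

variable {V : Type*} [AddCommGroup V] [Module (ZMod 2) V] [Fintype V]

theorem exists_mkQ_eq_notMem_of_card_lt {G : Submodule (ZMod 2) V} {E : Finset V}
    (hE : #E < Fintype.card G) (q : V ⧸ G) : ∃ y, G.mkQ y = q ∧ y ∉ E := by
  obtain ⟨y, rfl⟩ := G.mkQ_surjective q
  have h_card : #(univ.image fun g : G ↦ y + g) = Fintype.card G :=
    card_image_of_injective _ ((add_right_injective y).comp Subtype.val_injective)
  obtain ⟨z, hz, hzE⟩ := exists_mem_notMem_of_card_lt_card (hE.trans_eq h_card.symm)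
  obtain ⟨g, -, rfl⟩ := mem_image.1 hz
  exact ⟨y + g, by simp, hzE⟩

theorem card_sup_span_image_le {ι : Type*} (D : Submodule (ZMod 2) V) (v : ι → V) (s : Finset ι) :
    #{x | x ∈ D ⊔ Submodule.span (ZMod 2) (v '' s)} ≤ Fintype.card D * 2 ^ #s := by
  rw [← Fintype.card_subtype, card_eq_two_pow_finrank (D ⊔ _ : Submodule (ZMod 2) V),
    card_eq_two_pow_finrank D, ← pow_add]
  gcongr
  · exact one_le_two
  · refine (Submodule.finrank_add_le_finrank_add_finrank _ _).trans ?_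
    gcongr
    rw [← coe_image]
    exact (finrank_span_finset_le_card _).trans card_image_le

theorem exists_mkQ_eq_forall_add_mem {M : Finset V} {D G : Submodule (ZMod 2) V} (hDG : D ≤ G)
    {s : Finset (V ⧸ G)} {v : V ⧸ G → V} (hv : ∀ q ∈ s, G.mkQ (v q) = q)
    (h_card : Fintype.card D * (2 ^ #s + #s * #{x ∈ Mᶜ | x ∉ G}) < Fintype.card G)
    {q : V ⧸ G} (hq : q ∉ s) :
    ∃ y, G.mkQ y = q ∧ (∀ q' ∈ s, ∀ x ∈ D, y + v q' + x ∈ M) ∧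
      y ∉ D ⊔ Submodule.span (ZMod 2) (v '' s) := by
  set S : Finset V := {x | x ∈ D ⊔ Submodule.span (ZMod 2) (v '' s)}
  set B : Finset V := {x ∈ Mᶜ | x ∉ G}
  set E : Finset V := (s ×ˢ B ×ˢ (univ : Finset D)).image fun p ↦ p.2.1 + v p.1 + p.2.2
  have hE : #E ≤ #s * (#B * Fintype.card D) :=
    card_image_le.trans (by simp only [card_product, card_univ, le_refl])
  have h_bad : #(S ∪ E) < Fintype.card G := by
    calc #(S ∪ E) ≤ Fintype.card D * 2 ^ #s + #s * (#B * Fintype.card D) :=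
          (card_union_le S E).trans (add_le_add (card_sup_span_image_le D v s) hE)
      _ = Fintype.card D * (2 ^ #s + #s * #B) := by ring
      _ < Fintype.card G := h_card
  obtain ⟨y, rfl, hy⟩ := exists_mkQ_eq_notMem_of_card_lt h_bad q
  rw [mem_union, not_or] at hy
  refine ⟨y, rfl, fun q' hq' x hx ↦ ?_, by simpa [S] using hy.1⟩
  by_contra h_notMem
  have h_out : y + v q' + x ∉ G := by
    rw [G.add_mem_iff_left (hDG hx), ← ZModModule.sub_eq_add, ← Submodule.Quotient.eq]
    exact fun h_eq ↦ hq (by rwa [Submodule.mkQ_apply, h_eq, ← Submodule.mkQ_apply, hv q' hq'])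
  refine hy.2 (mem_image.2 ⟨(q', y + v q' + x, ⟨x, hx⟩), ?_, ?_⟩)
  · simp only [mem_product, mem_univ, and_true]
    exact ⟨hq', mem_filter.2 ⟨mem_compl.2 h_notMem, h_out⟩⟩
  · rw [show y + v q' + x + v q' + x = y + (v q' + v q') + (x + x) by abel]
    simp only [ZModModule.add_self, add_zero]

theorem exists_transversal_on {M : Finset V} {D G : Submodule (ZMod 2) V} (hDG : D ≤ G)
    (s : Finset (V ⧸ G))
    (h_card : Fintype.card D * (2 ^ #s + #s * #{x ∈ Mᶜ | x ∉ G}) < Fintype.card G) :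
    ∃ v : V ⧸ G → V, (∀ q ∈ s, G.mkQ (v q) = q) ∧
      (s : Set (V ⧸ G)).Pairwise (fun q q' ↦ ∀ x ∈ D, v q + v q' + x ∈ M) ∧
      LinearIndepOn (ZMod 2) (D.mkQ ∘ v) s := by
  induction s using Finset.induction_on with
  | empty => exact ⟨0, by simp, by simp, by simp⟩
  | insert q s hq ih =>
    have h_card' : Fintype.card D * (2 ^ #s + #s * #{x ∈ Mᶜ | x ∉ G}) < Fintype.card G := by
      refine h_card.trans_le' ?_
      gcongr
      · exact one_le_two
      all_goals exact subset_insert q s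
    obtain ⟨v, hv, hvM, hv_indep⟩ := ih h_card'
    obtain ⟨y, hy, hyM, hy_span⟩ := exists_mkQ_eq_forall_add_mem hDG hv h_card' hq
    have h_eqOn : Set.EqOn v (Function.update v q y) s := fun q' hq' ↦
      (Function.update_of_ne (ne_of_mem_of_not_mem (mem_coe.1 hq') hq) _ _).symm
    refine ⟨Function.update v q y, ?_, ?_, ?_⟩
    · rw [forall_mem_insert, Function.update_self]
      exact ⟨hy, fun q' hq' ↦ h_eqOn hq' ▸ hv q' hq'⟩
    · rw [coe_insert, Set.pairwise_insert_of_notMem (by simpa using hq)]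
      refine ⟨fun q₁ h₁ q₂ h₂ h_ne ↦ ?_, fun q' hq' ↦ ?_⟩
      · simp only [← h_eqOn h₁, ← h_eqOn h₂]
        exact hvM h₁ h₂ h_ne
      · rw [← h_eqOn hq', Function.update_self, add_comm (v q')]
        exact ⟨hyM q' hq', hyM q' hq'⟩
    · rw [coe_insert]
      refine LinearIndepOn.insert (hv_indep.congr (h_eqOn.comp_left (g := D.mkQ))) ?_
      rwa [Set.image_comp, ← h_eqOn.image_eq, ← Submodule.map_span, Function.comp_apply,
        Function.update_self, ← Submodule.mem_comap, Submodule.comap_map_mkQ]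

end Transversal

section Embedding

theorem linearIndependent_sumElim_add_of_mkQ {K V κ Q : Type*} [Field K] [AddCommGroup V]
    [Module K V] [Finite κ] [Finite Q] {D : Submodule K V} {b : κ → V} {v : Q → V}
    (hb : LinearIndependent K b) (hbD : ∀ i, b i ∈ D) (hv : LinearIndependent K (D.mkQ ∘ v))
    (e : κ → Q) : LinearIndependent K (Sum.elim v fun i ↦ v (e i) + b i) := by
  have := Fintype.ofFinite κ
  have := Fintype.ofFinite Q
  have h_bv : LinearIndependent K (Sum.elim b v) := by
    have hb' : LinearIndependent K fun i ↦ (⟨b i, hbD i⟩ : D) := .of_comp D.subtype hb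
    exact .sumElim_of_quotient hb' v hv
  set u := Sum.elim v fun i ↦ v (e i) + b i
  rw [linearIndependent_iff_card_le_finrank_span, Set.finrank, Fintype.card_sum, add_comm,
    ← Fintype.card_sum, ← finrank_span_eq_card h_bv]
  have h_mem (j : Q ⊕ κ) : u j ∈ Submodule.span K (Set.range u) :=
    Submodule.subset_span (Set.mem_range_self j)
  have := FiniteDimensional.span_of_finite K (Set.finite_range u)
  refine Submodule.finrank_mono (Submodule.span_le.2 ?_)
  rintro _ ⟨i | q, rfl⟩
  · simpa [u] using sub_mem (h_mem (.inr i)) (h_mem (.inl (e i)))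
  · exact h_mem (.inl q)

variable {V : Type*} [AddCommGroup V] [Module (ZMod 2) V]

theorem pairwise_sumElim_add_mem {κ Q : Type*} {M : Set V} {D : Submodule (ZMod 2) V}
    {b : κ → V} {v : Q → V} (hbD : ∀ i, b i ∈ D) (hbM : ∀ i, b i ∈ M)
    (hv : Pairwise fun q q' ↦ ∀ x ∈ D, v q + v q' + x ∈ M) (e : κ ↪ Q) :
    Pairwise fun i j ↦
      Sum.elim v (fun i ↦ v (e i) + b i) i + Sum.elim v (fun i ↦ v (e i) + b i) j ∈ M := by
  have h_mixed (q : Q) (i : κ) : v q + (v (e i) + b i) ∈ M := by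
    rw [← add_assoc]
    rcases eq_or_ne q (e i) with rfl | hq
    · simpa [ZModModule.add_self] using hbM i
    · exact hv hq _ (hbD i)
  rintro (q | i) (q' | j) hij
  · simpa using hv (Sum.inl_injective.ne_iff.1 hij) 0 D.zero_mem
  · exact h_mixed q j
  · simpa [add_comm] using h_mixed q' i
  · simpa [add_add_add_comm] using
      hv (e.injective.ne (Sum.inr_injective.ne_iff.1 hij)) _ (add_mem (hbD i) (hbD j))

theorem hasRestriction_cycleMatroid_of_card_lt [Fintype V] {ι : Type*} [Fintype ι]
    [DecidableEq ι] {M : Finset V} (hM : 0 ∉ M) {G : Submodule (ZMod 2) V} {k : ℕ}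
    (hι : Fintype.card ι ≤ Fintype.card (V ⧸ G) + (k + 1))
    (hk : k + 1 ≤ Fintype.card (V ⧸ G)) (hMG : 2 ^ k ≤ #{x ∈ M | x ∈ G})
    (h_card : 2 ^ (k + 1) * (2 ^ Fintype.card (V ⧸ G) +
      Fintype.card (V ⧸ G) * #{x ∈ Mᶜ | x ∉ G}) < Fintype.card G) :
    HasRestriction (cycleMatroid (⊤ : SimpleGraph ι)) (M : Set V) := by
  obtain ⟨b, hb, hbMG⟩ := exists_linearIndependent_of_two_pow_le_card
    (fun h ↦ hM (mem_filter.1 h).1) hMG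
  simp only [mem_filter, forall_and] at hbMG
  obtain ⟨hbM, hbG⟩ := hbMG
  set D := Submodule.span (ZMod 2) (Set.range b)
  have hbD (i) : b i ∈ D := Submodule.subset_span (Set.mem_range_self i)
  have hDG : D ≤ G := Submodule.span_le.2 (Set.range_subset_iff.2 hbG)
  have hD : Fintype.card D = 2 ^ (k + 1) := by
    rw [card_eq_two_pow_finrank, finrank_span_eq_card hb, Fintype.card_fin]
  obtain ⟨v, -, hvM, hv⟩ := exists_transversal_on hDG univ (by rwa [hD, card_univ])
  rw [coe_univ, Set.pairwise_univ] at hvM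
  rw [coe_univ, linearIndepOn_univ_iff] at hv
  obtain ⟨e⟩ : Nonempty (Fin (k + 1) ↪ V ⧸ G) :=
    Function.Embedding.nonempty_of_card_le (by simpa using hk)
  obtain ⟨f⟩ : Nonempty (ι ↪ (V ⧸ G) ⊕ Fin (k + 1)) :=
    Function.Embedding.nonempty_of_card_le (by simpa using hι)
  exact hasRestriction_cycleMatroid_top_iff.2
    ⟨_, (linearIndependent_sumElim_add_of_mkQ hb hbD hv e).comp f f.injective,
      (pairwise_sumElim_add_mem hbD hbM hvM e).comp_of_injective f.injective⟩

end Embedding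

section UpperBound

theorem card_quotient_eq_two_pow {V : Type*} [AddCommGroup V] [Module (ZMod 2) V] [Fintype V]
    {G : Submodule (ZMod 2) V} {t : ℕ} (hG : finrank (ZMod 2) G + t = finrank (ZMod 2) V) :
    Fintype.card (V ⧸ G) = 2 ^ t := by
  have h_dim := G.finrank_quotient_add_finrank
  rw [card_eq_two_pow_finrank]
  congr 1
  lia

theorem hasRestriction_cycleMatroid_of_near {V ι : Type*} [AddCommGroup V] [Module (ZMod 2) V]
    [Fintype V] [Fintype ι] [DecidableEq ι] {M : Finset V} (hM : 0 ∉ M) {G : Submodule (ZMod 2) V}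
    {t k : ℕ} (hG : finrank (ZMod 2) G + t = finrank (ZMod 2) V) (hk : k + 1 ≤ 2 ^ t)
    (hι : Fintype.card ι ≤ 2 ^ t + (k + 1)) (hMc : #Mᶜ + 2 ^ k ≤ Fintype.card G)
    (h_large : 2 * 2 ^ (k + 1) * 2 ^ (2 ^ t) < Fintype.card G)
    (h_near : 2 * 2 ^ (k + 1) * 2 ^ t * #{x ∈ Mᶜ | x ∉ G} ≤ Fintype.card G) :
    HasRestriction (cycleMatroid (⊤ : SimpleGraph ι)) (M : Set V) := by
  have h_quot := card_quotient_eq_two_pow hG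
  have h_split : Fintype.card G ≤ #{x ∈ M | x ∈ G} + #Mᶜ := by
    rw [Fintype.card_subtype]
    refine (card_le_card fun x hx ↦ ?_).trans (card_union_le _ _)
    by_cases hxM : x ∈ M <;> simp_all
  refine hasRestriction_cycleMatroid_of_card_lt hM (G := G) (k := k) (by lia) (by lia) (by lia) ?_
  rw [h_quot]
  linarith

theorem exists_hasRestriction_cycleMatroid {ι : Type*} [Fintype ι] [DecidableEq ι] {t k : ℕ}
    (hk : k + 1 ≤ 2 ^ t) (hι : Fintype.card ι ≤ 2 ^ t + (k + 1)) :
    ∃ n₀ : ℕ, ∀ (V : Type u) [AddCommGroup V] [Module (ZMod 2) V] [Fintype V] (M : Finset V),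
      0 ∉ M → n₀ ≤ finrank (ZMod 2) V →
      2 ^ finrank (ZMod 2) V + 2 ^ k ≤ #M + 2 ^ (finrank (ZMod 2) V - t) →
      HasRestriction (cycleMatroid (⊤ : SimpleGraph ι)) (M : Set V) := by
  obtain ⟨n₁, hn₁⟩ := BoseBurtonFree.exists_near_submodule.{u} t (Fintype.card ι)
    (κ := 1 / (2 * 2 ^ (k + 1) * 2 ^ t * 2 ^ t)) (by positivity)
  refine ⟨max n₁ (t + 2 ^ t + k + 3), fun V _ _ _ M hM hV h_card ↦ ?_⟩
  rw [max_le_iff] at hV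
  have hMc : #Mᶜ + 2 ^ k ≤ 2 ^ (finrank (ZMod 2) V - t) := by
    have h_compl := card_add_card_compl M
    rw [card_eq_two_pow_finrank] at h_compl
    lia
  by_cases h_free : BoseBurtonFree M (t + 1) (Fintype.card ι)
  · have hV_card : Fintype.card V = 2 ^ t * 2 ^ (finrank (ZMod 2) V - t) := by
      rw [card_eq_two_pow_finrank, ← pow_add]
      congr 1
      lia
    obtain ⟨G, hG, h_near⟩ := hn₁ V M hM hV.1 h_free (by rw [hV_card]; gcongr; lia)
    have hG_card : Fintype.card G = 2 ^ (finrank (ZMod 2) V - t) := by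
      rw [card_eq_two_pow_finrank]
      congr 1
      lia
    refine hasRestriction_cycleMatroid_of_near hM hG hk hι (hMc.trans_eq hG_card.symm) ?_ ?_
    · rw [hG_card, ← pow_succ', ← pow_add]
      exact Nat.pow_lt_pow_right one_lt_two (by lia)
    · rw [hV_card, ← hG_card, one_div_mul_eq_div, le_div_iff₀ (by positivity)] at h_near
      refine Nat.le_of_mul_le_mul_left (c := 2 ^ t) ?_ (by positivity)
      rify at h_near ⊢
      linarith
  · simp only [BoseBurtonFree, not_forall, not_not] at h_free
    obtain ⟨X, F, hX, hF, hXF⟩ := h_free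
    refine hXF.hasRestriction_cycleMatroid hM ?_ hF
    rw [card_eq_two_pow_finrank X, hX, pow_succ]
    lia

end UpperBound

section LowerBound

theorem not_hasRestriction_cycleMatroid {V ι : Type*} [AddCommGroup V] [Module (ZMod 2) V]
    [Fintype V] [Fintype ι] [DecidableEq ι] {M : Set V} {D G : Submodule (ZMod 2) V}
    (hMG : ∀ x ∈ M, x ∈ G → x ∈ D)
    (h_card : finrank (ZMod 2) D + Fintype.card (V ⧸ G) < Fintype.card ι) :
    ¬ HasRestriction (cycleMatroid (⊤ : SimpleGraph ι)) M := by
  rw [hasRestriction_cycleMatroid_top_iff]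
  rintro ⟨u, hu, huM⟩
  have : Nonempty ι := Fintype.card_pos_iff.1 (by lia)
  obtain ⟨g, hg⟩ : ∃ g : V ⧸ G → ι, ∀ i, G.mkQ (u (g (G.mkQ (u i)))) = G.mkQ (u i) :=
    ⟨Function.invFun fun i ↦ G.mkQ (u i), fun i ↦
      Function.invFun_eq (f := fun j ↦ G.mkQ (u j)) ⟨i, rfl⟩⟩
  have h_span : Submodule.span (ZMod 2) (Set.range u) ≤
      D ⊔ Submodule.span (ZMod 2) (Set.range (u ∘ g)) := by
    refine Submodule.span_le.2 (Set.range_subset_iff.2 fun i ↦ ?_)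
    have hg_span : u (g (G.mkQ (u i))) ∈ Submodule.span (ZMod 2) (Set.range (u ∘ g)) :=
      Submodule.subset_span ⟨G.mkQ (u i), rfl⟩
    specialize hg i
    generalize g (G.mkQ (u i)) = j at hg hg_span
    rcases eq_or_ne i j with rfl | hij
    · exact Submodule.mem_sup_right hg_span
    · have h_mem : u i + u j ∈ D := by
        refine hMG _ (huM hij) ?_
        rwa [← ZModModule.sub_eq_add, ← Submodule.Quotient.eq, eq_comm]
      rw [SetLike.mem_coe, ← add_sub_cancel_right (u i) (u j)]
      exact sub_mem (Submodule.mem_sup_left h_mem) (Submodule.mem_sup_right hg_span)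
  have h_dim := (Submodule.finrank_mono h_span).trans
    (Submodule.finrank_add_le_finrank_add_finrank _ _)
  have h_range : finrank (ZMod 2) (Submodule.span (ZMod 2) (Set.range (u ∘ g))) ≤
      Fintype.card (V ⧸ G) :=
    finrank_range_le_card _
  rw [finrank_span_eq_card hu] at h_dim
  lia

theorem exists_submodule_le_finrank_eq {K V : Type*} [Field K] [AddCommGroup V] [Module K V]
    {G : Submodule K V} {d : ℕ} (hd : d ≤ finrank K G) : ∃ D ≤ G, finrank K D = d := by
  obtain ⟨b, hb⟩ := exists_linearIndependent_of_le_finrank hd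
  have hb' := hb.map' G.subtype G.ker_subtype
  refine ⟨Submodule.span K (Set.range (G.subtype ∘ b)), ?_, ?_⟩
  · exact Submodule.span_le.2 (Set.range_subset_iff.2 fun i ↦ (b i).2)
  · rw [finrank_span_eq_card hb', Fintype.card_fin]

theorem exists_card_eq_not_hasRestriction {V ι : Type*} [AddCommGroup V] [Module (ZMod 2) V]
    [Finite V] [Fintype ι] [DecidableEq ι] {t d : ℕ} (hι : 2 ^ t + d < Fintype.card ι)
    (hd : t + d ≤ finrank (ZMod 2) V) :
    ∃ M : Finset V, 0 ∉ M ∧ ¬ HasRestriction (cycleMatroid (⊤ : SimpleGraph ι)) (M : Set V) ∧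
      #M = 2 ^ finrank (ZMod 2) V - 2 ^ (finrank (ZMod 2) V - t) + 2 ^ d - 1 := by
  have := Fintype.ofFinite V
  obtain ⟨G, -, hG⟩ := exists_submodule_le_finrank_eq (G := (⊤ : Submodule (ZMod 2) V))
    (d := finrank (ZMod 2) V - t) (by rw [finrank_top]; lia)
  obtain ⟨D, hDG, hD⟩ := exists_submodule_le_finrank_eq (G := G) (d := d) (by lia)
  have h_quot := card_quotient_eq_two_pow (G := G) (t := t) (by lia)
  have h_disjoint : Disjoint ({x | x ∈ G} : Finset V)ᶜ (({x | x ∈ D} : Finset V).erase 0) := by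
    rw [disjoint_compl_left_iff]
    exact (erase_subset _ _).trans (monotone_filter_right _ fun x _ hx ↦ hDG hx)
  refine ⟨({x | x ∈ G} : Finset V)ᶜ ∪ ({x | x ∈ D} : Finset V).erase 0, by simp,
    not_hasRestriction_cycleMatroid (D := D) (G := G) (fun x hx hxG ↦ ?_) (by lia), ?_⟩
  · simp_all
  · rw [card_union_of_disjoint h_disjoint, card_compl, card_erase_of_mem (by simp),
      ← Fintype.card_subtype, ← Fintype.card_subtype, card_eq_two_pow_finrank V,
      card_eq_two_pow_finrank D, card_eq_two_pow_finrank G, hG, hD,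
      Nat.add_sub_assoc Nat.one_le_two_pow]

end LowerBound

/-- Exact Turán numbers for cycle matroids of complete graphs. -/
theorem clique_exact (t t₀ : ℕ) (ht : 2 ≤ t) (ht₀1 : 2 ^ t₀ < t) (ht₀2 : t ≤ 2 ^ (t₀ + 1)) :
    ∃ n₀ : ℕ, ∀ n ≥ n₀,
      exNum (cycleMatroid (⊤ : SimpleGraph (Fin t))) n
        = 2 ^ n - 2 ^ (n - t₀) + 2 ^ (t - 2 ^ t₀ - 1) - 1 := by
  obtain ⟨k, hk⟩ : ∃ k, t = 2 ^ t₀ + k + 1 := ⟨t - 2 ^ t₀ - 1, by lia⟩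
  obtain ⟨n₁, hn₁⟩ := exists_hasRestriction_cycleMatroid (ι := Fin t) (t := t₀) (k := k)
    (by lia) (by rw [Fintype.card_fin]; lia)
  refine ⟨max n₁ (t₀ + k), fun n hn ↦ IsGreatest.csSup_eq ⟨?_, ?_⟩⟩
  · obtain ⟨M, hM₀, hM, h_card⟩ := exists_card_eq_not_hasRestriction (V := Fin n → ZMod 2)
      (ι := Fin t) (t := t₀) (d := k) (by rw [Fintype.card_fin]; lia) (by rw [finrank_fin_fun]; lia)
    refine ⟨M, mod_cast hM₀, hM, ?_⟩
    rw [Set.ncard_coe_finset, h_card, finrank_fin_fun, show t - 2 ^ t₀ - 1 = k by lia]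
  · rintro _ ⟨M, hM₀, hM, rfl⟩
    lift M to Finset (Fin n → ZMod 2) using M.toFinite
    contrapose! hM
    have h_pow : 2 ^ (n - t₀) ≤ 2 ^ n := Nat.pow_le_pow_right two_pos (n.sub_le t₀)
    have h_one : 1 ≤ 2 ^ k := Nat.one_le_two_pow
    rw [Set.ncard_coe_finset, show t - 2 ^ t₀ - 1 = k by lia] at hM
    exact hn₁ _ M (mod_cast hM₀) (by rw [finrank_fin_fun]; lia) (by rw [finrank_fin_fun]; lia)
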